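/- (Corollary 1, combinatorial core) The partition Π(L) has the maximum possible number of blocks: for every valid partition of L into k' blocks, the number of blocks of Π(L) is at least k'. -/

import Mathlib

/-- `pSum L i` is `x_i`: the sum of the first `i` elements of `L` (so `pSum L 0 = 0`). -/
def pSum (L : List ℝ) (i : ℕ) : ℝ := (L.take i).sum

/-- A valid partition of `L`: a partition of `L` into nonempty consecutive blocks
whose totals are non-decreasing from left to right. -/
def ValidPartition (L : List ℝ) (P : List (List ℝ)) : Prop :=
  P.flatten = L ∧ (∀ B ∈ P, B ≠ []) ∧ List.Chain' (· ≤ ·) (P.map List.sum)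

/-- The total of the last block of a partition (`0` for the empty partition). -/
def lastTotal (P : List (List ℝ)) : ℝ := (P.map List.sum).getLastD 0

/-- `wrapLen L` is the wrapping length `y_{|L|}`: the minimum, over all valid
partitions of `L`, of the total of the last block (with `wrapLen [] = 0`,
realized by the empty partition). -/
noncomputable def wrapLen (L : List ℝ) : ℝ :=
  sInf {t | ∃ P, ValidPartition L P ∧ lastTotal P = t}

open Classical in
/-- The recursively defined partition `Π(L)`: for a nonempty `L` of length `i`,
let `h` be the largest index `0 ≤ h < i` with `x_h + y_h ≤ x_i`, take
`(l_{h+1}, …, l_i)` as the last block, and recurse on `(l_1, …, l_h)`. -/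
noncomputable def piPart (L : List ℝ) : List (List ℝ) :=
  if L.length = 0 then []
  else
    let h := Nat.findGreatest
      (fun h => pSum L h + wrapLen (L.take h) ≤ pSum L L.length) (L.length - 1)
    piPart (L.take h) ++ [L.drop h]
termination_by L.length
decreasing_by
  have hle : Nat.findGreatest
      (fun h => pSum L h + wrapLen (L.take h) ≤ pSum L L.length) (L.length - 1)
      ≤ L.length - 1 := Nat.findGreatest_le _
  simp only [List.length_take]
  omega

/-!
If `A` is a prefix of a list `L` of nonnegative reals, then the cut index of `Π(A)` also satisfies
the inequality defining the cut index of `Π(L)`, because `x_{|A|} ≤ x_{|L|}`. Hence `Π` cuts `A` no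
later than it cuts `L`, and by recursion the number of blocks of `Π` is monotone along prefixes.

Let `Q ++ [B]` be a valid partition of `L`. The wrapping length of `Q.flatten` is at most the total
of the last block of `Q`, hence at most that of `B`, so `Q.flatten` is a prefix of the part of `L`
that precedes the last block of `Π(L)`. By monotonicity `Π(L)` has at least one block more than
`Π(Q.flatten)`, and induction on the number of blocks concludes.
-/

section Partitions

variable {L B : List ℝ} {P Q : List (List ℝ)}

theorem lastTotal_append_singleton (Q : List (List ℝ)) (B : List ℝ) :
    lastTotal (Q ++ [B]) = B.sum := by
  simp [lastTotal]

theorem lastTotal_nonneg (hP : ∀ l ∈ P.flatten, 0 ≤ l) : 0 ≤ lastTotal P := by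
  rcases P.eq_nil_or_concat' with rfl | ⟨Q, B, rfl⟩
  · exact le_rfl
  · rw [lastTotal_append_singleton]
    exact List.sum_nonneg fun l hl => hP l (by simp [hl])

theorem wrapLen_le_lastTotal (hL : ∀ l ∈ L, 0 ≤ l) (hP : ValidPartition L P) :
    wrapLen L ≤ lastTotal P := by
  refine csInf_le ⟨0, ?_⟩ ⟨P, hP, rfl⟩
  rintro _ ⟨P', hP', rfl⟩
  exact lastTotal_nonneg (hP'.1 ▸ hL)

theorem ValidPartition.of_append_singleton (h : ValidPartition L (Q ++ [B])) :
    ValidPartition Q.flatten Q := by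
  obtain ⟨-, hne, hchain⟩ := h
  rw [List.map_append] at hchain
  exact ⟨rfl, fun C hC => hne C (List.mem_append_left _ hC), hchain.left_of_append⟩

theorem ValidPartition.lastTotal_le_sum (h : ValidPartition L (Q ++ [B])) (hB : 0 ≤ B.sum) :
    lastTotal Q ≤ B.sum := by
  obtain ⟨-, -, hchain⟩ := h
  rcases Q.eq_nil_or_concat' with rfl | ⟨Q', C, rfl⟩
  · exact hB
  · rw [List.append_assoc, List.map_append] at hchain
    rw [lastTotal_append_singleton]
    exact List.isChain_pair.1 hchain.right_of_append

end Partitions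

section CutPrefix

open Classical in
/-- The largest index `h < |L|` with `x_h + y_h ≤ x_{|L|}`, at which `Π(L)` splits off its last
block; it is `0` if there is no such index. -/
noncomputable def lastCut (L : List ℝ) : ℕ :=
  Nat.findGreatest (fun h => pSum L h + wrapLen (L.take h) ≤ pSum L L.length) (L.length - 1)

/-- The part `(l_1, …, l_h)` of `L` on which `Π(L)` recurses: the longest proper prefix whose sum
plus wrapping length is at most the sum of `L`, empty if there is none. -/
noncomputable def cutPrefix (L : List ℝ) : List ℝ := L.take (lastCut L)

variable {A L : List ℝ}

theorem length_piPart (hL : L ≠ []) :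
    (piPart L).length = (piPart (cutPrefix L)).length + 1 := by
  rw [piPart, if_neg (List.length_eq_zero_iff.not.2 hL)]
  exact List.length_append

theorem cutPrefix_prefix (L : List ℝ) : cutPrefix L <+: L :=
  List.take_prefix _ _

theorem length_cutPrefix_lt (hL : L ≠ []) : (cutPrefix L).length < L.length := by
  have hcut : lastCut L ≤ L.length - 1 := Nat.findGreatest_le _
  have hpos : 0 < L.length := List.length_pos_iff.2 hL
  rw [cutPrefix, List.length_take]
  omega

theorem sum_cutPrefix_add_wrapLen_le (h : cutPrefix L ≠ []) :
    (cutPrefix L).sum + wrapLen (cutPrefix L) ≤ L.sum := by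
  have hcut : lastCut L ≠ 0 := fun h0 => h (by rw [cutPrefix, h0, List.take_zero])
  have hle : pSum L (lastCut L) + wrapLen (cutPrefix L) ≤ pSum L L.length :=
    Nat.findGreatest_of_ne_zero rfl hcut
  rwa [pSum, pSum, List.take_length] at hle

theorem prefix_cutPrefix (hA : A <+: L) (hlt : A.length < L.length)
    (hsum : A.sum + wrapLen A ≤ L.sum) : A <+: cutPrefix L := by
  have htake : L.take A.length = A := (List.prefix_iff_eq_take.1 hA).symm
  refine List.prefix_take_iff.2 ⟨hA, Nat.le_findGreatest (Nat.le_sub_one_of_lt hlt) ?_⟩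
  rwa [pSum, pSum, htake, List.take_length]

theorem cutPrefix_prefix_cutPrefix (hL : ∀ l ∈ L, 0 ≤ l) (h : A <+: L) :
    cutPrefix A <+: cutPrefix L := by
  by_cases hcut : cutPrefix A = []
  · exact hcut ▸ List.nil_prefix
  have hA : A ≠ [] := fun hA => hcut (List.prefix_nil.1 (hA ▸ cutPrefix_prefix A))
  apply prefix_cutPrefix ((cutPrefix_prefix A).trans h)
  · exact (length_cutPrefix_lt hA).trans_le h.length_le
  · exact (sum_cutPrefix_add_wrapLen_le hcut).trans (h.sublist.sum_le_sum hL)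

end CutPrefix

theorem length_piPart_le_of_prefix {A L : List ℝ} (hL : ∀ l ∈ L, 0 ≤ l) (h : A <+: L) :
    (piPart A).length ≤ (piPart L).length := by
  by_cases hA : A = []
  · rw [hA, piPart, if_pos List.length_nil]
    exact Nat.zero_le _
  have hcut : (piPart (cutPrefix A)).length ≤ (piPart (cutPrefix L)).length :=
    length_piPart_le_of_prefix (fun l hl => hL l ((cutPrefix_prefix L).subset hl))
      (cutPrefix_prefix_cutPrefix hL h)
  rw [length_piPart hA, length_piPart (h.ne_nil hA)]
  exact Nat.succ_le_succ hcut
termination_by A.length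
decreasing_by exact length_cutPrefix_lt hA

theorem ValidPartition.flatten_prefix_cutPrefix {L B : List ℝ} {Q : List (List ℝ)}
    (hL : ∀ l ∈ L, 0 ≤ l) (h : ValidPartition L (Q ++ [B])) : Q.flatten <+: cutPrefix L := by
  obtain rfl : Q.flatten ++ B = L := by simpa using h.1
  have hB : B ≠ [] := h.2.1 B (by simp)
  have hBsum : 0 ≤ B.sum := List.sum_nonneg fun l hl => hL l (List.mem_append_right _ hl)
  have hwrap : wrapLen Q.flatten ≤ B.sum :=
    (wrapLen_le_lastTotal (fun l hl => hL l (List.mem_append_left _ hl))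
      h.of_append_singleton).trans (h.lastTotal_le_sum hBsum)
  apply prefix_cutPrefix (List.prefix_append _ _)
  · simpa [List.length_pos_iff] using hB
  · rw [List.sum_append]
    gcongr

theorem ValidPartition.length_piPart_flatten_lt {L B : List ℝ} {Q : List (List ℝ)}
    (hL : ∀ l ∈ L, 0 ≤ l) (h : ValidPartition L (Q ++ [B])) :
    (piPart Q.flatten).length < (piPart L).length := by
  have hne : L ≠ [] := by
    rintro rfl
    exact h.2.1 B (by simp) (List.flatten_eq_nil_iff.1 h.1 B (by simp))
  rw [length_piPart hne, Nat.lt_succ_iff]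
  exact length_piPart_le_of_prefix (fun l hl => hL l ((cutPrefix_prefix L).subset hl))
    (h.flatten_prefix_cutPrefix hL)

/-- Corollary 1, combinatorial core: The partition `Π(L)` has the
maximum possible number of blocks: every valid partition of `L` into `k'` blocks
satisfies `k' ≤ |Π(L)|`. -/
theorem stmt_7 (L : List ℝ) (hL : ∀ l ∈ L, 0 < l) :
    ∀ P', ValidPartition L P' → P'.length ≤ (piPart L).length := by
  intro P' hP'
  induction P' using List.reverseRecOn generalizing L with
  | nil => exact Nat.zero_le _
  | append_singleton Q B ih =>
    have hQ : ∀ l ∈ Q.flatten, 0 < l := fun l hl => hL l (by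
      rw [← hP'.1, List.flatten_append]
      exact List.mem_append_left _ hl)
    calc (Q ++ [B]).length = Q.length + 1 := List.length_append
      _ ≤ (piPart Q.flatten).length + 1 :=
        Nat.succ_le_succ (ih Q.flatten hQ hP'.of_append_singleton)
      _ ≤ (piPart L).length := hP'.length_piPart_flatten_lt fun l hl => (hL l hl).le
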